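/- Under the hypotheses of the formation-angle lemma — k₁, k₂ > 0, r₁*, r₂* ∈ ℝ² nonzero, r₁(t) = r₁* + (r₁(0) − r₁*)e^{−k₁ t}, r₂(t) = r₂* + (r₂(0) − r₂*)e^{−k₂ t}, r₁(0) = μ r₁* for some μ > 0, and cross(r₁*, r₂(0)), cross(r₁*, r₂*) nonzero of the same sign — the 2×2 matrix R(t) whose rows are r₁(t)ᵀ and r₂(t)ᵀ is invertible for every t ≥ 0. -/

import Mathlib

noncomputable section

open scoped RealInnerProductSpace

/-- The plane `ℝ²` with the Euclidean norm and inner product. -/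
abbrev E2 : Type := EuclideanSpace ℝ (Fin 2)

/-- Action of a 2×2 matrix on a vector of `ℝ²`. -/
def matVec (M : Matrix (Fin 2) (Fin 2) ℝ) (v : E2) : E2 :=
  (WithLp.equiv 2 (Fin 2 → ℝ)).symm (M.mulVec (WithLp.equiv 2 (Fin 2 → ℝ) v))

/-- The Hessian matrix of `f : ℝ² → ℝ` at `x`. -/
def hessM (f : E2 → ℝ) (x : E2) : Matrix (Fin 2) (Fin 2) ℝ :=
  Matrix.of fun i j =>
    fderiv ℝ (fun y => fderiv ℝ f y (EuclideanSpace.single j 1)) x (EuclideanSpace.single i 1)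

/-- The planar cross product `cross(u,v) = u₁v₂ − u₂v₁ = ‖u‖‖v‖ sin θ`. -/
def cross (u v : E2) : ℝ := u 0 * v 1 - u 1 * v 0

/-- The 2×2 matrix whose rows are `uᵀ` and `vᵀ`. -/
def rowMat (u v : E2) : Matrix (Fin 2) (Fin 2) ℝ :=
  Matrix.of ![WithLp.equiv 2 (Fin 2 → ℝ) u, WithLp.equiv 2 (Fin 2 → ℝ) v]

/-!
Exponential decay towards a target stays on the segment from the target to the initial point.
Hence the first vector stays on the open ray spanned by its target. The endpoints of the second
segment lie on the same side of the line through that ray, and half-planes are convex, so the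
second vector never meets the line and the two vectors are never parallel.
-/

lemma exists_pos_eq_smul_of_mem_segment {𝕜 E : Type*} [Semiring 𝕜] [PartialOrder 𝕜]
    [IsStrictOrderedRing 𝕜] [AddCommMonoid E] [Module 𝕜 E] {μ : 𝕜} (hμ : 0 < μ) {x p : E}
    (hp : p ∈ segment 𝕜 x (μ • x)) : ∃ c : 𝕜, 0 < c ∧ p = c • x := by
  obtain ⟨a, b, ha, hb, hab, rfl⟩ := hp
  refine ⟨a * 1 + b * μ, convex_Ioi (0 : 𝕜) one_pos hμ ha hb hab, ?_⟩
  rw [add_smul, mul_smul, mul_smul, one_smul]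

lemma add_exp_smul_sub_mem_segment {E : Type*} [AddCommGroup E] [Module ℝ E] (x y : E) {k t : ℝ}
    (hkt : 0 ≤ k * t) : x + Real.exp (-(k * t)) • (y - x) ∈ segment ℝ x y :=
  (convex_segment x y).add_smul_sub_mem (left_mem_segment ℝ x y) (right_mem_segment ℝ x y)
    ⟨Real.exp_nonneg _, Real.exp_le_one_iff.mpr (neg_nonpos.mpr hkt)⟩

section Cross

variable (u v : E2)

lemma isLinearMap_cross : IsLinearMap ℝ (cross u) where
  map_add v w := by simp only [cross, PiLp.add_apply]; ring
  map_smul c v := by simp only [cross, PiLp.smul_apply, smul_eq_mul]; ring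

lemma cross_smul_left (c : ℝ) : cross (c • u) v = c * cross u v := by
  simp only [cross, PiLp.smul_apply, smul_eq_mul]
  ring

lemma convex_setOf_mul_cross_pos (c : ℝ) : Convex ℝ {v | 0 < c * cross u v} :=
  convex_halfSpace_gt (c • (isLinearMap_cross u).mk' _).isLinear 0

lemma det_rowMat : (rowMat u v).det = cross u v := by
  simp [rowMat, cross, Matrix.det_fin_two]

lemma isUnit_rowMat_iff : IsUnit (rowMat u v) ↔ cross u v ≠ 0 := by
  rw [Matrix.isUnit_iff_isUnit_det, det_rowMat, isUnit_iff_ne_zero]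

variable {u v}

lemma cross_ne_zero_of_mem_segment {w q : E2} (h : 0 < cross u w * cross u v)
    (hq : q ∈ segment ℝ v w) : cross u q ≠ 0 := by
  have hv : 0 < cross u v * cross u v := mul_self_pos.mpr (right_ne_zero_of_mul h.ne')
  have hw : 0 < cross u v * cross u w := by rwa [mul_comm]
  have hq_pos : 0 < cross u v * cross u q :=
    (convex_setOf_mul_cross_pos u (cross u v)).segment_subset hv hw hq
  exact right_ne_zero_of_mul hq_pos.ne'

lemma isUnit_rowMat_of_mem_segment {w p q : E2} {μ : ℝ} (hμ : 0 < μ)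
    (h : 0 < cross u w * cross u v) (hp : p ∈ segment ℝ u (μ • u)) (hq : q ∈ segment ℝ v w) :
    IsUnit (rowMat p q) := by
  obtain ⟨c, hc, rfl⟩ := exists_pos_eq_smul_of_mem_segment hμ hp
  rw [isUnit_rowMat_iff, cross_smul_left]
  exact mul_ne_zero hc.ne' (cross_ne_zero_of_mem_segment h hq)

end Cross

/-- invertibility of the formation matrix.
Under the hypotheses of the formation-angle lemma, the matrix `R(t)` with rows
`r₁(t)ᵀ, r₂(t)ᵀ` is invertible for every `t ≥ 0`. -/
theorem stmt6 (k₁ k₂ : ℝ) (hk₁ : 0 < k₁) (hk₂ : 0 < k₂)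
    (r₁s r₂s r₁0 r₂0 : E2) (hr₁s : r₁s ≠ 0) (hr₂s : r₂s ≠ 0)
    (μ : ℝ) (hμ : 0 < μ) (hdir : r₁0 = μ • r₁s)
    (hsign : 0 < cross r₁s r₂0 * cross r₁s r₂s)
    (r₁ r₂ : ℝ → E2)
    (hr₁ : ∀ t : ℝ, r₁ t = r₁s + Real.exp (-(k₁ * t)) • (r₁0 - r₁s))
    (hr₂ : ∀ t : ℝ, r₂ t = r₂s + Real.exp (-(k₂ * t)) • (r₂0 - r₂s))
    (R : ℝ → Matrix (Fin 2) (Fin 2) ℝ) (hR : ∀ t : ℝ, R t = rowMat (r₁ t) (r₂ t)) :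
    ∀ t ≥ (0 : ℝ), IsUnit (R t) := by
  intro t ht
  have hr₁t : r₁ t ∈ segment ℝ r₁s (μ • r₁s) := by
    rw [hr₁, hdir]
    exact add_exp_smul_sub_mem_segment _ _ (mul_nonneg hk₁.le ht)
  have hr₂t : r₂ t ∈ segment ℝ r₂s r₂0 := by
    rw [hr₂]
    exact add_exp_smul_sub_mem_segment _ _ (mul_nonneg hk₂.le ht)
  rw [hR]
  exact isUnit_rowMat_of_mem_segment hμ hsign hr₁t hr₂t
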